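/- For the family of line arrangements A_d (d ≥ 8) defined below, one has r(A_d) = d − 4 for all d ≥ 8. -/

import Mathlib

open Classical MvPolynomial

variable {K : Type*} [Field K] [CharZero K] {ℓ : ℕ}

/-- A (central) hyperplane arrangement: a finite set of nonzero linear forms,
pairwise non-proportional. -/
def IsArrangement (A : Finset (MvPolynomial (Fin ℓ) K)) : Prop :=
  (∀ α ∈ A, α ≠ 0 ∧ α.IsHomogeneous 1) ∧
    ∀ α ∈ A, ∀ β ∈ A, α ≠ β → ∀ c : K, α ≠ c • β

/-- The arrangement is essential: the common zero set of its forms is `{0}`. -/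
def IsEssential (A : Finset (MvPolynomial (Fin ℓ) K)) : Prop :=
  ∀ v : Fin ℓ → K, (∀ α ∈ A, eval v α = 0) → v = 0

/-- The defining polynomial `Q(A)`. -/
noncomputable def Qpoly (A : Finset (MvPolynomial (Fin ℓ) K)) : MvPolynomial (Fin ℓ) K :=
  ∏ α ∈ A, α

/-- Apply a derivation `θ = Σ θ_j ∂_j` to a polynomial. -/
noncomputable def applyDer (θ : Fin ℓ → MvPolynomial (Fin ℓ) K)
    (f : MvPolynomial (Fin ℓ) K) : MvPolynomial (Fin ℓ) K :=
  ∑ j, θ j * pderiv j f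

/-- The minimal degree of a Jacobian relation `r(A)`. -/
noncomputable def mdr (A : Finset (MvPolynomial (Fin ℓ) K)) : ℕ :=
  sInf {r | ∃ θ : Fin ℓ → MvPolynomial (Fin ℓ) K, θ ≠ 0 ∧
    (∀ j, (θ j).IsHomogeneous r) ∧ applyDer θ (Qpoly A) = 0}

/-- The number of elements `|A^H|` of the restriction of `A` to `H`:
the number of distinct subspaces `H ∩ ker α_L`, `L ∈ A \ {H}`. -/
noncomputable def restCard (A : Finset (MvPolynomial (Fin ℓ) K))
    (H : MvPolynomial (Fin ℓ) K) : ℕ :=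
  ((A.erase H).image fun L => {v : Fin ℓ → K | eval v H = 0 ∧ eval v L = 0}).card

/-- The linear form `a·x + b·y − z` in `ℚ[x,y,z]`. -/
noncomputable def lineL (a b : ℚ) : MvPolynomial (Fin 3) ℚ :=
  C a * X 0 + C b * X 1 - X 2

/-- The arrangement `A_{3p+2}` of `3p+2` lines, `p ≥ 2`, with defining polynomial
`x·y·(x/2^{p+1} + y/3^{p+1} − z)·∏_{j=1}^{p} (x/2^j + y/3^j − z)(x/2^j + y/3^{j+1} − z)
·∏_{j=1}^{p−1} (x/2^j + y/3^{j+2} − z)`. -/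
noncomputable def baseA (p : ℕ) : Finset (MvPolynomial (Fin 3) ℚ) :=
  {X 0, X 1, lineL (1 / 2 ^ (p + 1)) (1 / 3 ^ (p + 1))} ∪
    (Finset.Icc 1 p).image (fun j => lineL (1 / 2 ^ j) (1 / 3 ^ j)) ∪
    (Finset.Icc 1 p).image (fun j => lineL (1 / 2 ^ j) (1 / 3 ^ (j + 1))) ∪
    (Finset.Icc 1 (p - 1)).image (fun j => lineL (1 / 2 ^ j) (1 / 3 ^ (j + 2)))

/-- The line `H_1 : 27x − 8y = 0`. -/
noncomputable def lineH1 : MvPolynomial (Fin 3) ℚ := C 27 * X 0 - C 8 * X 1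

/-- The line `H_2 : x − y = 0`. -/
noncomputable def lineH2 : MvPolynomial (Fin 3) ℚ := X 0 - X 1

/-- The family `A_d`, `d ≥ 8`: `A_{3p+2} = baseA p`, `A_{3p+3} = A_{3p+2} ∪ {H_1}`,
`A_{3p+4} = A_{3p+3} ∪ {H_2}`. -/
noncomputable def Afam (d : ℕ) : Finset (MvPolynomial (Fin 3) ℚ) :=
  if d % 3 = 2 then baseA ((d - 2) / 3)
  else if d % 3 = 0 then insert lineH1 (baseA ((d - 3) / 3))
  else insert lineH2 (insert lineH1 (baseA ((d - 4) / 3)))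

/-! ### Linear forms and the restriction to a line -/

/-- The pairing of a covector with a vector. -/
def dt (a q : Fin 3 → ℚ) : ℚ := a 0 * q 0 + a 1 * q 1 + a 2 * q 2

/-- The linear form with given coefficients. -/
noncomputable def lin (a : Fin 3 → ℚ) : MvPolynomial (Fin 3) ℚ :=
  C (a 0) * X 0 + C (a 1) * X 1 + C (a 2) * X 2

lemma eval_lin (a q : Fin 3 → ℚ) : eval q (lin a) = dt a q := by
  simp [lin, dt]

lemma lin_homog (a : Fin 3 → ℚ) : (lin a).IsHomogeneous 1 := by
  unfold lin
  exact ((isHomogeneous_C_mul_X _ _).add (isHomogeneous_C_mul_X _ _)).add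
    (isHomogeneous_C_mul_X _ _)

/-- Projection to the kernel of the form `a` along the coordinate `k`. -/
noncomputable def sg (a : Fin 3 → ℚ) (k : Fin 3) :
    MvPolynomial (Fin 3) ℚ →ₐ[ℚ] MvPolynomial (Fin 3) ℚ :=
  aeval (fun i => X i - if i = k then C ((a k)⁻¹) * lin a else 0)

/-- The same projection on vectors. -/
noncomputable def pj (a : Fin 3 → ℚ) (k : Fin 3) (q : Fin 3 → ℚ) : Fin 3 → ℚ :=
  fun i => q i - if i = k then (a k)⁻¹ * dt a q else 0

lemma eval_sg (a : Fin 3 → ℚ) (k : Fin 3) (q : Fin 3 → ℚ) (f : MvPolynomial (Fin 3) ℚ) :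
    eval q (sg a k f) = eval (pj a k q) f := by
  unfold sg
  rw [← coe_aeval_eq_eval, ← coe_aeval_eq_eval]
  show ((aeval q).comp (aeval _)) f = aeval _ f
  congr 1
  ext i
  simp only [AlgHom.comp_apply, aeval_X, map_sub, pj]
  split_ifs
  · simp [← eval_lin]
  · simp

lemma pj_ker (a : Fin 3 → ℚ) (k : Fin 3) (hk : a k ≠ 0) (q : Fin 3 → ℚ) :
    dt a (pj a k q) = 0 := by
  fin_cases k <;> simp [dt, pj] at hk ⊢ <;> field_simp <;> ring

lemma pj_id (a : Fin 3 → ℚ) (k : Fin 3) (q : Fin 3 → ℚ) (h : dt a q = 0) :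
    pj a k q = q := by
  funext i; simp [pj, h]

lemma sg_eq_zero (a : Fin 3 → ℚ) (k : Fin 3) (hk : a k ≠ 0) (f : MvPolynomial (Fin 3) ℚ) :
    sg a k f = 0 ↔ ∀ q, dt a q = 0 → eval q f = 0 := by
  constructor
  · intro h q hq
    have := eval_sg a k q f
    rw [h, pj_id a k q hq] at this
    simpa using this.symm
  · intro h
    apply MvPolynomial.funext
    intro q
    rw [eval_sg, h _ (pj_ker a k hk q)]; simp

lemma lin_dvd_sub (a : Fin 3 → ℚ) (k : Fin 3) (f : MvPolynomial (Fin 3) ℚ) :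
    lin a ∣ f - sg a k f := by
  rw [← Ideal.mem_span_singleton, ← Ideal.Quotient.eq]
  have : (Ideal.Quotient.mkₐ ℚ (Ideal.span {lin a})) =
      (Ideal.Quotient.mkₐ ℚ (Ideal.span {lin a})).comp (sg a k) := by
    ext i
    simp only [AlgHom.comp_apply, sg, aeval_X, map_sub]
    split_ifs
    · have : (Ideal.Quotient.mkₐ ℚ (Ideal.span {lin a})) (lin a) = 0 :=
        Ideal.Quotient.eq_zero_iff_mem.2 (Ideal.mem_span_singleton_self _)
      rw [map_mul, this]; simp
    · simp
  exact congrArg (fun g => g f) this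

lemma exists_coord_ne (a : Fin 3 → ℚ) (h : a ≠ 0) : ∃ k, a k ≠ 0 := by
  by_contra! hh
  exact h (funext hh)

lemma lin_dvd (a : Fin 3 → ℚ) (ha : a ≠ 0) (f : MvPolynomial (Fin 3) ℚ)
    (h : ∀ q, dt a q = 0 → eval q f = 0) : lin a ∣ f := by
  obtain ⟨k, hk⟩ := exists_coord_ne a ha
  have := lin_dvd_sub a k f
  rwa [(sg_eq_zero a k hk f).2 h, sub_zero] at this

lemma ker_prod (a : Fin 3 → ℚ) (ha : a ≠ 0) (f g : MvPolynomial (Fin 3) ℚ)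
    (h : ∀ q, dt a q = 0 → eval q f * eval q g = 0)
    (hg : ∃ q, dt a q = 0 ∧ eval q g ≠ 0) : ∀ q, dt a q = 0 → eval q f = 0 := by
  obtain ⟨k, hk⟩ := exists_coord_ne a ha
  have h1 : sg a k (f * g) = 0 := (sg_eq_zero a k hk _).2 (by simpa using h)
  rw [map_mul, mul_eq_zero] at h1
  rcases h1 with h1 | h1
  · exact (sg_eq_zero a k hk _).1 h1
  · obtain ⟨q, hq, hqne⟩ := hg
    exact absurd ((sg_eq_zero a k hk _).1 h1 q hq) hqne

/-- Proportionality of two vectors. -/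
def Par (a b : Fin 3 → ℚ) : Prop := ∀ i j, a i * b j = a j * b i

lemma Par.symm {a b : Fin 3 → ℚ} (h : Par a b) : Par b a := fun i j => by
  linarith [h i j, h j i]

lemma not_par_ne {a b : Fin 3 → ℚ} (h : ¬ Par a b) : a ≠ 0 := by
  rintro rfl; exact h (fun i j => by simp)

lemma exists_ker (a b : Fin 3 → ℚ) (h : ¬ Par a b) : ∃ q, dt a q = 0 ∧ dt b q ≠ 0 := by
  by_contra! hh
  apply h
  have h1 := hh ![0, a 2, - a 1] (by simp [dt]; ring)
  have h2 := hh ![a 2, 0, - a 0] (by simp [dt]; ring)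
  have h3 := hh ![a 1, - a 0, 0] (by simp [dt]; ring)
  simp [dt] at h1 h2 h3
  intro i j
  fin_cases i <;> fin_cases j <;> simp <;> linarith

lemma par_zero {a h w : Fin 3 → ℚ} (hah : ¬ Par a h) (h1 : Par a w) (h2 : Par h w) : w = 0 := by
  unfold Par at hah
  push Not at hah
  obtain ⟨i, j, hij⟩ := hah
  funext k
  have : (a i * h j - a j * h i) * w k = 0 := by
    linear_combination a i * h2 j k + h k * h1 i j - a j * h2 i k
  rcases mul_eq_zero.1 this with h3 | h3
  · exact absurd (sub_eq_zero.1 h3) hij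
  · exact h3

lemma eval_smul (F : MvPolynomial (Fin 3) ℚ) (m : ℕ) (hF : F.IsHomogeneous m) (s : ℚ)
    (q : Fin 3 → ℚ) : eval (s • q) F = s ^ m * eval q F := by
  rw [eval_eq, eval_eq, Finset.mul_sum]
  apply Finset.sum_congr rfl
  intro d hd
  have hd' := hF.degree_eq_sum_deg_support hd
  simp only [Pi.smul_apply, smul_eq_mul, mul_pow, Finset.prod_mul_distrib, Finset.prod_pow_eq_pow_sum]
  have : ∑ i ∈ d.support, d i = m := by
    rw [hd']
  rw [this]; ring

/-- Restriction of a polynomial to the parametrized line `u + t q`. -/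
noncomputable def pl (u q : Fin 3 → ℚ) (F : MvPolynomial (Fin 3) ℚ) : Polynomial ℚ :=
  aeval (fun i => Polynomial.C (u i) + Polynomial.C (q i) * Polynomial.X) F

lemma pl_eval (u q : Fin 3 → ℚ) (F : MvPolynomial (Fin 3) ℚ) (t : ℚ) :
    (pl u q F).eval t = eval (u + t • q) F := by
  unfold pl
  rw [← Polynomial.coe_aeval_eq_eval, ← coe_aeval_eq_eval]
  show ((Polynomial.aeval t).comp (aeval _)) F = aeval _ F
  congr 1
  ext i
  simp only [AlgHom.comp_apply, aeval_X, map_add, map_mul, Polynomial.aeval_C, Polynomial.aeval_X,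
    Pi.add_apply, Pi.smul_apply, smul_eq_mul, Algebra.algebraMap_self, RingHom.id_apply]
  ring

lemma pl_deg (u q : Fin 3 → ℚ) (F : MvPolynomial (Fin 3) ℚ) (m : ℕ) (hF : F.IsHomogeneous m) :
    (pl u q F).natDegree ≤ m := by
  have := aeval_natDegree_le (n := 1) F hF.totalDegree_le
    (fun i => Polynomial.C (u i) + Polynomial.C (q i) * Polynomial.X) (fun i => by compute_degree)
  rwa [mul_one] at this

/-- The determinant of three covectors. -/
def dt3 (h a b : Fin 3 → ℚ) : ℚ :=
  h 0 * (a 1 * b 2 - a 2 * b 1) - h 1 * (a 0 * b 2 - a 2 * b 0) + h 2 * (a 0 * b 1 - a 1 * b 0)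

/-- A form of degree `m` with more than `m` zeros on a line vanishes on this line. -/
lemma vanish (F : MvPolynomial (Fin 3) ℚ) (m : ℕ) (hF : F.IsHomogeneous m) (h : Fin 3 → ℚ)
    (T : Finset (Fin 3 → ℚ)) (hT : m < T.card)
    (hz : ∀ a ∈ T, ∀ q, dt h q = 0 → dt a q = 0 → eval q F = 0)
    (hd : ∀ a ∈ T, ∀ b ∈ T, a ≠ b → dt3 h a b ≠ 0) :
    ∀ q, dt h q = 0 → eval q F = 0 := by
  intro q hq
  by_contra hne
  have haq : ∀ a ∈ T, dt a q ≠ 0 := fun a ha h0 => hne (hz a ha q hq h0)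
  have hqq : q 0 ^ 2 + q 1 ^ 2 + q 2 ^ 2 ≠ 0 := by
    intro h0
    obtain ⟨a, ha⟩ := Finset.card_pos.1 (by omega : 0 < T.card)
    have h00 : q 0 = 0 := by nlinarith [sq_nonneg (q 0), sq_nonneg (q 1), sq_nonneg (q 2)]
    have h01 : q 1 = 0 := by nlinarith [sq_nonneg (q 0), sq_nonneg (q 1), sq_nonneg (q 2)]
    have h02 : q 2 = 0 := by nlinarith [sq_nonneg (q 0), sq_nonneg (q 1), sq_nonneg (q 2)]
    exact haq a ha (by simp [dt, h00, h01, h02])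
  obtain ⟨u, hu⟩ : ∃ u : Fin 3 → ℚ, u = ![h 1 * q 2 - h 2 * q 1, h 2 * q 0 - h 0 * q 2,
    h 0 * q 1 - h 1 * q 0] := ⟨_, rfl⟩
  have hu0 : u 0 = h 1 * q 2 - h 2 * q 1 := by simp [hu]
  have hu1 : u 1 = h 2 * q 0 - h 0 * q 2 := by simp [hu]
  have hu2 : u 2 = h 0 * q 1 - h 1 * q 0 := by simp [hu]
  have hhu : dt h u = 0 := by simp only [dt, hu0, hu1, hu2]; ring
  have hlin : ∀ (a v w : Fin 3 → ℚ) (t : ℚ), dt a (v + t • w) = dt a v + t * dt a w := by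
    intro a v w t; simp [dt]; ring
  have hpl : pl u q F = 0 := by
    have hroot : ∀ a ∈ T, (pl u q F).eval (-(dt a u) / dt a q) = 0 := by
      intro a ha
      rw [pl_eval]
      apply hz a ha
      · rw [hlin, hhu, hq]; ring
      · rw [hlin]; have := haq a ha; field_simp; ring
    have hinj : Set.InjOn (fun a => -(dt a u) / dt a q) (T : Set (Fin 3 → ℚ)) := by
      intro a ha b hb hab
      by_contra hne'
      have h1 := haq a ha
      have h2 := haq b hb
      simp only at hab
      rw [div_eq_div_iff h1 h2] at hab
      apply hd a ha b hb hne'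
      have h3 : (q 0 ^ 2 + q 1 ^ 2 + q 2 ^ 2) * dt3 h a b = 0 := by
        simp only [dt, hu0, hu1, hu2, dt3] at hab hq ⊢
        linear_combination hab + (q 0 * (a 1 * b 2 - a 2 * b 1) - q 1
           * (a 0 * b 2 - a 2 * b 0) + q 2 * (a 0 * b 1 - a 1 * b 0)) * hq
      exact (mul_eq_zero.1 h3).resolve_left hqq
    apply Polynomial.eq_zero_of_natDegree_lt_card_of_eval_eq_zero' _
      (T.image (fun a => -(dt a u) / dt a q))
    · intro t ht
      obtain ⟨a, ha, rfl⟩ := Finset.mem_image.1 ht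
      exact hroot a ha
    · rw [Finset.card_image_of_injOn hinj]
      exact lt_of_le_of_lt (pl_deg u q F m hF) hT
  have hpl2 : pl q u F = 0 := by
    apply Polynomial.eq_zero_of_infinite_isRoot
    apply Set.Infinite.mono (s := {s : ℚ | s ≠ 0})
    · intro s hs
      show (pl q u F).eval s = 0
      rw [pl_eval]
      have e : q + s • u = s • (u + s⁻¹ • q) := by
        rw [smul_add, smul_smul, mul_inv_cancel₀ hs, one_smul, add_comm]
      rw [e, eval_smul F m hF, ← pl_eval, hpl]; simp
    · exact (Set.finite_singleton (0:ℚ)).infinite_compl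
  apply hne
  have := pl_eval q u F 0
  rw [hpl2] at this
  simpa using this.symm

lemma homog_quot (L F G : MvPolynomial (Fin 3) ℚ) (m : ℕ) (hL : L.IsHomogeneous 1)
    (hF : F.IsHomogeneous (m + 1)) (h : F = L * G) :
    ∃ G' : MvPolynomial (Fin 3) ℚ, G'.IsHomogeneous m ∧ F = L * G' := by
  refine ⟨homogeneousComponent m G, homogeneousComponent_isHomogeneous _ _, ?_⟩
  have h1 : homogeneousComponent (m + 1) F = F := homogeneousComponent_eq_self hF
  rw [← h1, h]
  conv_lhs => rw [← sum_homogeneousComponent G, Finset.mul_sum, map_sum]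
  have : ∀ i, homogeneousComponent (m + 1) (L * homogeneousComponent i G) =
      if i = m then L * homogeneousComponent m G else 0 := by
    intro i
    have hi : (L * homogeneousComponent i G) ∈ homogeneousSubmodule (Fin 3) ℚ (1 + i) :=
      hL.mul (homogeneousComponent_isHomogeneous i G)
    rw [homogeneousComponent_of_mem hi]
    by_cases him : i = m
    · subst him; simp [add_comm]
    · rw [if_neg (by omega), if_neg him]
  simp only [this, Finset.sum_ite_eq', Finset.mem_range]
  split_ifs with hh
  · rfl
  · rw [homogeneousComponent_eq_zero _ _ (by omega)]; simp

/-- There is no nonzero field of `2`-vectors of small degree tangent to all lines. -/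
def Good (N : Finset (Fin 3 → ℚ)) : Prop :=
  ∀ (m : ℕ) (W : Fin 3 → MvPolynomial (Fin 3) ℚ), m + 4 ≤ N.card →
    (∀ i, (W i).IsHomogeneous m) → X 0 * W 0 + X 1 * W 1 + X 2 * W 2 = 0 →
    (∀ a ∈ N, ∀ q, dt a q = 0 → Par a (fun i => eval q (W i))) → W = 0

lemma good_small (N : Finset (Fin 3 → ℚ)) (h : N.card ≤ 3) : Good N := by
  intro m W hm; omega

lemma good_insert (N T : Finset (Fin 3 → ℚ)) (h : Fin 3 → ℚ) (hN : Good N) (hh : h ∉ N)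
    (hTN : T ⊆ N) (hT : N.card ≤ T.card + 2) (hpar : ∀ a ∈ N, ¬ Par a h)
    (hd : ∀ a ∈ T, ∀ b ∈ T, a ≠ b → dt3 h a b ≠ 0) : Good (insert h N) := by
  intro m W hm hW hx hta
  rw [Finset.card_insert_of_notMem hh] at hm
  have hNc : 0 < N.card := by omega
  have hh0 : h ≠ 0 := by
    obtain ⟨a, ha⟩ := Finset.card_pos.1 hNc
    exact not_par_ne fun hp => hpar a ha hp.symm
  have hv : ∀ i, ∀ q, dt h q = 0 → eval q (W i) = 0 := by
    intro i
    apply vanish (W i) m (hW i) h T (by omega) _ hd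
    intro a ha q hq haq
    have h1 := hta a (Finset.mem_insert_of_mem (hTN ha)) q haq
    have h2 := hta h (Finset.mem_insert_self _ _) q hq
    exact congrFun (par_zero (hpar a (hTN ha)) h1 h2) i
  have hdvd : ∀ i, lin h ∣ W i := fun i => lin_dvd h hh0 _ (hv i)
  rcases m with _ | m
  · funext i
    apply MvPolynomial.funext
    intro q
    have h0 := eval_smul (W i) 0 (hW i) 0 q
    have h1 := hv i 0 (by simp [dt])
    rw [zero_smul, h1, pow_zero, one_mul] at h0
    rw [← h0]; simp
  · choose G hG using hdvd
    have : ∀ i, ∃ G' : MvPolynomial (Fin 3) ℚ, G'.IsHomogeneous m ∧ W i = lin h * G' :=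
      fun i => homog_quot _ _ _ _ (lin_homog h) (hW i) (hG i)
    choose V hV hWV using this
    have hl0 : lin h ≠ 0 := by
      obtain ⟨a, ha⟩ := Finset.card_pos.1 hNc
      obtain ⟨q, -, hq⟩ := exists_ker a h (hpar a ha)
      intro h0
      rw [← eval_lin, h0] at hq
      simp at hq
    have hV0 : V = 0 := by
      apply hN m V (by omega) hV
      · have : lin h * (X 0 * V 0 + X 1 * V 1 + X 2 * V 2) = 0 := by
          rw [← hx, hWV 0, hWV 1, hWV 2]; ring
        exact (mul_eq_zero.1 this).resolve_left hl0
      · intro a ha q hq i j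
        have key := ker_prod a (not_par_ne (hpar a ha)) (C (a i) * V j - C (a j) * V i) (lin h)
          (by
            intro q hq
            have h1 := hta a (Finset.mem_insert_of_mem ha) q hq i j
            simp only [hWV i, hWV j, map_mul] at h1
            simp only [map_sub, map_mul, eval_C]
            linear_combination h1)
          (by
            obtain ⟨q, hq, hq'⟩ := exists_ker a h (hpar a ha)
            exact ⟨q, hq, by rwa [eval_lin]⟩) q hq
        simp only [map_sub, map_mul, eval_C] at key
        exact sub_eq_zero.1 key
    funext i
    rw [hWV i, hV0]; simp

/-! ### From derivations to tangent fields -/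

lemma applyDer_mul (θ : Fin 3 → MvPolynomial (Fin 3) ℚ) (f g : MvPolynomial (Fin 3) ℚ) :
    applyDer θ (f * g) = applyDer θ f * g + f * applyDer θ g := by
  simp only [applyDer, Fin.sum_univ_three, pderiv_mul]; ring

lemma applyDer_lin (θ : Fin 3 → MvPolynomial (Fin 3) ℚ) (a : Fin 3 → ℚ) :
    applyDer θ (lin a) = θ 0 * C (a 0) + θ 1 * C (a 1) + θ 2 * C (a 2) := by
  simp [applyDer, Fin.sum_univ_three, lin, pderiv_X, Pi.single_apply]

lemma prod_lin_homog (N : Finset (Fin 3 → ℚ)) : (∏ a ∈ N, lin a).IsHomogeneous N.card := by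
  have := IsHomogeneous.prod N lin (fun _ => 1) (fun a _ => lin_homog a)
  simpa using this

lemma ker_not_prod (a : Fin 3 → ℚ) (ha : a ≠ 0) (N : Finset (Fin 3 → ℚ))
    (h : ∀ b ∈ N, ¬ Par a b) : ∃ q, dt a q = 0 ∧ eval q (∏ b ∈ N, lin b) ≠ 0 := by
  obtain ⟨k, hk⟩ := exists_coord_ne a ha
  by_contra! hh
  have h1 := (sg_eq_zero a k hk _).2 hh
  rw [map_prod, Finset.prod_eq_zero_iff] at h1
  obtain ⟨b, hb, hb0⟩ := h1
  obtain ⟨q, hq, hq'⟩ := exists_ker a b (h b hb)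
  have := (sg_eq_zero a k hk _).1 hb0 q hq
  rw [eval_lin] at this
  exact hq' this

lemma lower (N : Finset (Fin 3 → ℚ)) (hN : Good N) (h0 : ∀ a ∈ N, a ≠ 0)
    (hp : ∀ a ∈ N, ∀ b ∈ N, a ≠ b → ¬ Par a b)
    (θ : Fin 3 → MvPolynomial (Fin 3) ℚ) (r : ℕ) (hr : r + 5 ≤ N.card)
    (hθ : ∀ j, (θ j).IsHomogeneous r) (hQ : applyDer θ (∏ a ∈ N, lin a) = 0) : θ = 0 := by
  have htan : ∀ a ∈ N, ∀ q, dt a q = 0 →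
      eval q (θ 0) * a 0 + eval q (θ 1) * a 1 + eval q (θ 2) * a 2 = 0 := by
    intro a ha q hq
    have key := ker_prod a (h0 a ha) (applyDer θ (lin a)) (∏ b ∈ N.erase a, lin b)
      (by
        intro q hq
        rw [← Finset.mul_prod_erase N lin ha, applyDer_mul] at hQ
        have := congrArg (eval q) hQ
        rw [map_add, map_mul, map_mul, eval_lin, hq] at this
        simpa using this)
      (ker_not_prod a (h0 a ha) _ (fun b hb => hp a ha b (Finset.mem_of_mem_erase hb)
        (Finset.ne_of_mem_erase hb).symm)) q hq
    rw [applyDer_lin] at key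
    simpa using key
  obtain ⟨W, hW⟩ : ∃ W : Fin 3 → MvPolynomial (Fin 3) ℚ, W = ![X 1 * θ 2 - X 2 * θ 1,
    X 2 * θ 0 - X 0 * θ 2, X 0 * θ 1 - X 1 * θ 0] := ⟨_, rfl⟩
  have hW0 : W 0 = X 1 * θ 2 - X 2 * θ 1 := by simp [hW]
  have hW1 : W 1 = X 2 * θ 0 - X 0 * θ 2 := by simp [hW]
  have hW2 : W 2 = X 0 * θ 1 - X 1 * θ 0 := by simp [hW]
  have hh : ∀ i j : Fin 3, (X i * θ j).IsHomogeneous (r + 1) := fun i j => by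
    rw [add_comm]; exact (isHomogeneous_X ℚ i).mul (hθ j)
  have hWz : W = 0 := by
    apply hN (r + 1) W (by omega)
    · intro i
      fin_cases i
      · show (W 0).IsHomogeneous _
        rw [hW0]; exact (hh _ _).sub (hh _ _)
      · show (W 1).IsHomogeneous _
        rw [hW1]; exact (hh _ _).sub (hh _ _)
      · show (W 2).IsHomogeneous _
        rw [hW2]; exact (hh _ _).sub (hh _ _)
    · rw [hW0, hW1, hW2]; ring
    · intro a ha q hq
      have ht := htan a ha q hq
      unfold dt at hq
      have e0 : eval q (W 0) = q 1 * eval q (θ 2) - q 2 * eval q (θ 1) := by simp [hW0]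
      have e1 : eval q (W 1) = q 2 * eval q (θ 0) - q 0 * eval q (θ 2) := by simp [hW1]
      have e2 : eval q (W 2) = q 0 * eval q (θ 1) - q 1 * eval q (θ 0) := by simp [hW2]
      have f01 : a 0 * eval q (W 1) = a 1 * eval q (W 0) := by
        rw [e0, e1]; linear_combination q 2 * ht - eval q (θ 2) * hq
      have f02 : a 0 * eval q (W 2) = a 2 * eval q (W 0) := by
        rw [e0, e2]; linear_combination - q 1 * ht + eval q (θ 1) * hq
      have f12 : a 1 * eval q (W 2) = a 2 * eval q (W 1) := by
        rw [e1, e2]; linear_combination q 0 * ht - eval q (θ 0) * hq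
      intro i j
      fin_cases i <;> fin_cases j <;> 
        first
        | rfl
        | exact f01
        | exact f02
        | exact f12
        | exact f01.symm
        | exact f02.symm
        | exact f12.symm
  have g0 : X 1 * θ 2 - X 2 * θ 1 = 0 := by rw [← hW0, hWz]; rfl
  have g1 : X 2 * θ 0 - X 0 * θ 2 = 0 := by rw [← hW1, hWz]; rfl
  have g2 : X 0 * θ 1 - X 1 * θ 0 = 0 := by rw [← hW2, hWz]; rfl
  have hE := (prod_lin_homog N).sum_X_mul_pderiv
  have hQ0 : (∏ a ∈ N, lin a) ≠ 0 := by
    rw [Finset.prod_ne_zero_iff]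
    intro a ha hl
    obtain ⟨k, hk⟩ := exists_coord_ne a (h0 a ha)
    have := eval_lin a (Pi.single k 1)
    rw [hl] at this
    fin_cases k <;> simp [dt] at this hk <;> exact hk this.symm
  set Q := ∏ a ∈ N, lin a
  rw [Fin.sum_univ_three, nsmul_eq_mul] at hE
  simp only [applyDer, Fin.sum_univ_three] at hQ
  have hn : ((N.card : ℕ) : MvPolynomial (Fin 3) ℚ) ≠ 0 := by
    rw [Nat.cast_ne_zero]; omega
  have fin : ∀ t : MvPolynomial (Fin 3) ℚ, t * ((N.card : MvPolynomial (Fin 3) ℚ) * Q) = 0 →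
      t = 0 := fun t ht => (mul_eq_zero.1 ht).resolve_right (mul_ne_zero hn hQ0)
  funext i
  fin_cases i
  · apply fin (θ 0)
    linear_combination X 0 * hQ - θ 0 * hE - g2 * pderiv 1 Q + g1 * pderiv 2 Q
  · apply fin (θ 1)
    linear_combination X 1 * hQ - θ 1 * hE + g2 * pderiv 0 Q - g0 * pderiv 2 Q
  · apply fin (θ 2)
    linear_combination X 2 * hQ - θ 2 * hE - g1 * pderiv 0 Q + g0 * pderiv 1 Q

lemma upper (N S : Finset (Fin 3 → ℚ)) (h0 : ∀ a ∈ N, a ≠ 0) (hS : S ⊆ N) (hS4 : S.card = 4)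
    (hN : 5 ≤ N.card) (P : Fin 3 → ℚ) (hP0 : P 0 = 0) (hP2 : P 2 = 1)
    (hP : ∀ a ∈ S, dt a P = 0) :
    ∃ θ : Fin 3 → MvPolynomial (Fin 3) ℚ, θ ≠ 0 ∧ (∀ j, (θ j).IsHomogeneous (N.card - 4)) ∧
      applyDer θ (∏ a ∈ N, lin a) = 0 := by
  obtain ⟨Q2, hQ2⟩ : ∃ Q2, Q2 = ∏ a ∈ N \ S, lin a := ⟨_, rfl⟩
  obtain ⟨Q1, hQ1⟩ : ∃ Q1, Q1 = ∏ a ∈ S, lin a := ⟨_, rfl⟩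
  have hQ : ∏ a ∈ N, lin a = Q2 * Q1 := by
    rw [hQ1, hQ2, Finset.prod_sdiff hS]
  have hc : (N \ S).card = N.card - 4 := by
    rw [Finset.card_sdiff_of_subset hS, hS4]
  have hom2 : Q2.IsHomogeneous (N.card - 4) := by
    rw [hQ2, ← hc]; exact prod_lin_homog _
  have hQ20 : Q2 ≠ 0 := by
    rw [hQ2, Finset.prod_ne_zero_iff]
    intro a ha hl
    obtain ⟨k, hk⟩ := exists_coord_ne a (h0 a (Finset.mem_sdiff.1 ha).1)
    have := eval_lin a (Pi.single k 1)
    rw [hl] at this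
    fin_cases k <;> simp [dt] at this hk <;> exact hk this.symm
  obtain ⟨δ, hδ⟩ : ∃ δ : Fin 3 → MvPolynomial (Fin 3) ℚ, δ = fun j => C (P j) := ⟨_, rfl⟩
  have hδ1 : applyDer δ Q1 = 0 := by
    have : ∀ T : Finset (Fin 3 → ℚ), T ⊆ S → applyDer δ (∏ a ∈ T, lin a) = 0 := by
      intro T
      induction T using Finset.induction_on with
      | empty => intro _; simp [applyDer]
      | insert a T ha ih =>
        intro hT
        rw [Finset.prod_insert ha, applyDer_mul,
          ih ((Finset.subset_insert _ _).trans hT), applyDer_lin]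
        have := hP a (hT (Finset.mem_insert_self _ _))
        have h2 : δ 0 * C (a 0) + δ 1 * C (a 1) + δ 2 * C (a 2) = 0 := by
          simp only [hδ, ← C_mul, ← C_add]
          rw [← C_0]
          congr 1
          unfold dt at this
          linarith
        rw [h2]; simp
    rw [hQ1]; exact this S subset_rfl
  have hhd : (applyDer δ Q2).IsHomogeneous (N.card - 4 - 1) := by
    unfold applyDer
    apply IsHomogeneous.sum
    intro j _
    rw [hδ]
    exact (hom2.pderiv).C_mul _
  have hE := (prod_lin_homog N).sum_X_mul_pderiv
  have hn : ((N.card : ℕ) : ℚ) ≠ 0 := by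
    rw [Nat.cast_ne_zero]; omega
  refine ⟨fun j => C (N.card : ℚ) * Q2 * δ j - applyDer δ Q2 * X j, ?_, ?_, ?_⟩
  · intro hz
    have z0 := congrFun hz 0
    have z2 := congrFun hz 2
    simp only [hδ, hP0, hP2, Pi.zero_apply, C_0, C_1] at z0 z2
    have : C (N.card : ℚ) * Q2 * X 0 = 0 := by
      linear_combination X 0 * z2 - X 2 * z0
    rw [mul_eq_zero, mul_eq_zero] at this
    rcases this with (h | h) | h
    · rw [← C_0, (C_injective (Fin 3) ℚ).eq_iff] at h
      exact hn h
    · exact hQ20 h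
    · exact X_ne_zero 0 h
  · intro j
    apply IsHomogeneous.sub
    · rw [hδ]
      have := (hom2.C_mul (N.card : ℚ)).mul (isHomogeneous_C (Fin 3) (P j))
      simpa using this
    · have := hhd.mul (isHomogeneous_X ℚ j)
      rwa [show N.card - 4 - 1 + 1 = N.card - 4 by omega] at this
  · have e1 : applyDer δ (∏ a ∈ N, lin a) = applyDer δ Q2 * Q1 := by
      rw [hQ, applyDer_mul, hδ1]; ring
    rw [Fin.sum_univ_three, nsmul_eq_mul] at hE
    have e2 : C (N.card : ℚ) = ((N.card : ℕ) : MvPolynomial (Fin 3) ℚ) := by simp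
    rw [e2]
    have e3 : ∀ f : MvPolynomial (Fin 3) ℚ,
        applyDer (fun j => (N.card : MvPolynomial (Fin 3) ℚ) * Q2 * δ j - applyDer δ Q2 * X j) f =
        (N.card : MvPolynomial (Fin 3) ℚ) * Q2 * applyDer δ f - applyDer δ Q2 *
          (X 0 * pderiv 0 f + X 1 * pderiv 1 f + X 2 * pderiv 2 f) := by
      intro f
      generalize applyDer δ Q2 = D
      simp only [applyDer, Fin.sum_univ_three]; ring
    rw [e3, e1, hE, hQ]; ring

lemma lin_injective : Function.Injective lin := by
  intro a b h
  have key : ∀ q, dt a q = dt b q := fun q => by rw [← eval_lin, ← eval_lin, h]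
  have h1 := key ![1, 0, 0]
  have h2 := key ![0, 1, 0]
  have h3 := key ![0, 0, 1]
  simp [dt] at h1 h2 h3
  funext i
  fin_cases i
  · exact h1
  · exact h2
  · exact h3

lemma mdr_eq (N S : Finset (Fin 3 → ℚ)) (hG : Good N) (h0 : ∀ a ∈ N, a ≠ 0)
    (hp : ∀ a ∈ N, ∀ b ∈ N, a ≠ b → ¬ Par a b) (hS : S ⊆ N) (hS4 : S.card = 4)
    (hN : 5 ≤ N.card) (P : Fin 3 → ℚ) (hP0 : P 0 = 0) (hP2 : P 2 = 1)
    (hP : ∀ a ∈ S, dt a P = 0) : mdr (N.image lin) = N.card - 4 := by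
  have hQ : Qpoly (N.image lin) = ∏ a ∈ N, lin a := by
    unfold Qpoly
    rw [Finset.prod_image (fun a _ b _ h => lin_injective h)]
  unfold mdr
  rw [hQ]
  have hmem := upper N S h0 hS hS4 hN P hP0 hP2 hP
  apply le_antisymm
  · exact Nat.sInf_le hmem
  · refine le_csInf ⟨N.card - 4, ?_⟩ ?_
    · exact hmem
    intro r hr
    obtain ⟨θ, hθ0, hθ, hθQ⟩ := hr
    by_contra hlt
    exact hθ0 (lower N hG h0 hp θ r (by omega) hθ hθQ)

/-! ### Arithmetic of the family -/

lemma core_nat (m n m' n' : ℕ) (hm : 1 ≤ m) (hn : 1 ≤ n) (hm' : 1 ≤ m') (hn' : 1 ≤ n')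
    (hmn : m ≤ n + 2)
    (h : ((2:ℤ) ^ m - 1) * 2 ^ m' * (3 ^ n' - 1) = (2 ^ m' - 1) * (3 ^ n - 1) * 3 ^ n') :
    False := by
  have hM : (2:ℤ) ≤ 2 ^ m := by
    calc (2:ℤ) = 2 ^ 1 := by norm_num
      _ ≤ _ := pow_le_pow_right₀ (by norm_num) hm
  have hM' : (2:ℤ) ≤ 2 ^ m' := by
    calc (2:ℤ) = 2 ^ 1 := by norm_num
      _ ≤ _ := pow_le_pow_right₀ (by norm_num) hm'
  have hN' : (3:ℤ) ≤ 3 ^ n' := by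
    calc (3:ℤ) = 3 ^ 1 := by norm_num
      _ ≤ _ := pow_le_pow_right₀ (by norm_num) hn'
  have hN : (3:ℤ) ≤ 3 ^ n := by
    calc (3:ℤ) = 3 ^ 1 := by norm_num
      _ ≤ _ := pow_le_pow_right₀ (by norm_num) hn
  have hMle : (2:ℤ) ^ m ≤ 4 * 2 ^ n := by
    calc (2:ℤ) ^ m ≤ 2 ^ (n + 2) := pow_le_pow_right₀ (by norm_num) hmn
      _ = _ := by ring
  have hlt : (3:ℤ) ^ n - 1 < 2 * (2 ^ m - 1) := by
    by_contra hc
    push Not at hc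
    have hpos : (0:ℤ) < (2 ^ m' - 1) * 3 ^ n' := by
      apply mul_pos <;> linarith
    have h1 : 2 * ((2:ℤ) ^ m - 1) * ((2 ^ m' - 1) * 3 ^ n') ≤
        (3 ^ n - 1) * ((2 ^ m' - 1) * 3 ^ n') := mul_le_mul_of_nonneg_right hc hpos.le
    have h2 : (2:ℤ) ^ m' * (3 ^ n' - 1) < 2 * ((2 ^ m' - 1) * 3 ^ n') := by nlinarith
    have h3 := mul_lt_mul_of_pos_left h2 (show (0:ℤ) < 2 ^ m - 1 by linarith)
    nlinarith
  have hn5 : n ≤ 5 := by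
    by_contra hc
    push Not at hc
    obtain ⟨k, rfl⟩ := Nat.exists_eq_add_of_le hc
    have : (2:ℤ) ^ k ≤ 3 ^ k := pow_le_pow_left₀ (by norm_num) (by norm_num) k
    have hk : (1:ℤ) ≤ 3 ^ k := one_le_pow₀ (by norm_num)
    have e1 : (3:ℤ) ^ (5 + 1 + k) = 729 * 3 ^ k := by ring
    have e2 : (2:ℤ) ^ (5 + 1 + k) = 64 * 2 ^ k := by ring
    rw [e1] at hlt
    rw [e2] at hMle
    linarith
  have d3 : (3:ℤ) ^ n' ∣ 2 ^ m - 1 := by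
    have h1 : (3:ℤ) ^ n' ∣ (2 ^ m - 1) * (2 ^ m' * (3 ^ n' - 1)) := by
      rw [← mul_assoc, h]; exact dvd_mul_left _ _
    refine IsCoprime.dvd_of_dvd_mul_right (IsCoprime.mul_right ?_ ?_) h1
    · apply IsCoprime.pow
      exact ⟨1, -1, by norm_num⟩
    · exact ⟨1, -1, by ring⟩
  have d2 : (2:ℤ) ^ m' ∣ 3 ^ n - 1 := by
    have h1 : (2:ℤ) ^ m' ∣ (3 ^ n - 1) * ((2 ^ m' - 1) * 3 ^ n') := by
      have : (3 ^ n - 1) * ((2 ^ m' - 1) * 3 ^ n') =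
        (2:ℤ) ^ m' * ((2 ^ m - 1) * (3 ^ n' - 1)) := by linear_combination -h
      rw [this]; exact dvd_mul_right _ _
    refine IsCoprime.dvd_of_dvd_mul_right (IsCoprime.mul_right ?_ ?_) h1
    · exact ⟨1, -1, by ring⟩
    · apply IsCoprime.pow
      exact ⟨-1, 1, by norm_num⟩
  have l3 := Int.le_of_dvd (by linarith) d3
  have l2 := Int.le_of_dvd (by linarith) d2
  have hm7 : m ≤ 7 := by omega
  have b1 : (2:ℤ) ^ m ≤ 2 ^ 7 := pow_le_pow_right₀ (by norm_num) hm7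
  have b2 : (3:ℤ) ^ n ≤ 3 ^ 5 := pow_le_pow_right₀ (by norm_num) hn5
  have hnle4 : n' ≤ 4 := by
    by_contra hc
    have : (3:ℤ) ^ 5 ≤ 3 ^ n' := pow_le_pow_right₀ (by norm_num) (by omega)
    norm_num at *
    linarith
  have hmle7 : m' ≤ 7 := by
    by_contra hc
    have : (2:ℤ) ^ 8 ≤ 2 ^ m' := pow_le_pow_right₀ (by norm_num) (by omega)
    norm_num at *
    linarith
  clear b1 b2 l3 l2 hMle hM hM' hN' hN
  interval_cases n <;> interval_cases m <;> 
    first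
    | (exfalso; norm_num at hlt; done)
    | (exfalso; norm_num at hmn; done)
    | (interval_cases n' <;> interval_cases m' <;> norm_num at h)

/-- `2^{-i}` and `3^{-j}`. -/
def tw (i : ℕ) : ℚ := 1 / 2 ^ i
/-- `2^{-i}` and `3^{-j}`. -/
def th (j : ℕ) : ℚ := 1 / 3 ^ j

lemma tw_lt {i i' : ℕ} (h : i < i') : tw i' < tw i :=
  one_div_lt_one_div_of_lt (by positivity) (pow_lt_pow_right₀ (by norm_num) h)

lemma th_lt {i i' : ℕ} (h : i < i') : th i' < th i :=
  one_div_lt_one_div_of_lt (by positivity) (pow_lt_pow_right₀ (by norm_num) h)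

lemma tw_inj {i i' : ℕ} (h : tw i = tw i') : i = i' := by
  rcases lt_trichotomy i i' with h1 | h1 | h1
  · exact absurd h (tw_lt h1).ne'
  · exact h1
  · exact absurd h (tw_lt h1).ne

lemma th_inj {i i' : ℕ} (h : th i = th i') : i = i' := by
  rcases lt_trichotomy i i' with h1 | h1 | h1
  · exact absurd h (th_lt h1).ne'
  · exact h1
  · exact absurd h (th_lt h1).ne

/-- The index condition for the lines of the family. -/
def Band (a : ℕ × ℕ) : Prop := 1 ≤ a.1 ∧ a.1 ≤ a.2 ∧ a.2 ≤ a.1 + 2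

lemma core (a b c : ℕ × ℕ) (ha : Band a) (hb : Band b) (hc : Band c) (h1 : a.1 < b.1)
    (h2 : b.1 < c.1) (h3 : a.2 ≠ b.2) (h4 : b.2 ≠ c.2) :
    (tw a.1 - tw b.1) * (th b.2 - th c.2) ≠ (tw b.1 - tw c.1) * (th a.2 - th b.2) := by
  obtain ⟨i1, j1⟩ := a
  obtain ⟨i2, j2⟩ := b
  obtain ⟨i3, j3⟩ := c
  simp only [Band] at *
  have p1 := tw_lt h1
  have p2 := tw_lt h2
  rcases lt_or_gt_of_ne h3 with h5 | h5
  · rcases lt_or_gt_of_ne h4 with h6 | h6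
    · intro h
      obtain ⟨m, rfl⟩ := Nat.exists_eq_add_of_lt h1
      obtain ⟨m', rfl⟩ := Nat.exists_eq_add_of_lt h2
      obtain ⟨n, rfl⟩ := Nat.exists_eq_add_of_lt h5
      obtain ⟨n', rfl⟩ := Nat.exists_eq_add_of_lt h6
      apply core_nat (m + 1) (n + 1) (m' + 1) (n' + 1) (by omega) (by omega) (by omega) (by omega)
        (by omega)
      have e : (((2:ℚ) ^ (m + 1) - 1) * 2 ^ (m' + 1) * (3 ^ (n' + 1) - 1)) =
          (2 ^ (m' + 1) - 1) * (3 ^ (n + 1) - 1) * 3 ^ (n' + 1) := by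
        have e1 : tw i1 - tw (i1 + m + 1) = tw i1 * (2 ^ (m + 1) - 1) / 2 ^ (m + 1) := by
          simp only [tw, add_assoc]; rw [pow_add (2:ℚ) i1]; field_simp
        have e2 : tw (i1 + m + 1) - tw (i1 + m + 1 + m' + 1) =
            tw i1 * (2 ^ (m' + 1) - 1) / 2 ^ (m + 1) / 2 ^ (m' + 1) := by
          have : i1 + m + 1 + m' + 1 = i1 + (m + 1) + (m' + 1) := by ring
          simp only [tw, this]
          rw [add_assoc i1 m 1, pow_add (2:ℚ) (i1 + (m + 1)), pow_add (2:ℚ) i1]; field_simp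
        have e3 : th j1 - th (j1 + n + 1) = th j1 * (3 ^ (n + 1) - 1) / 3 ^ (n + 1) := by
          simp only [th, add_assoc]; rw [pow_add (3:ℚ) j1]; field_simp
        have e4 : th (j1 + n + 1) - th (j1 + n + 1 + n' + 1) =
            th j1 * (3 ^ (n' + 1) - 1) / 3 ^ (n + 1) / 3 ^ (n' + 1) := by
          have : j1 + n + 1 + n' + 1 = j1 + (n + 1) + (n' + 1) := by ring
          simp only [th, this]
          rw [add_assoc j1 n 1, pow_add (3:ℚ) (j1 + (n + 1)), pow_add (3:ℚ) j1]; field_simp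
        rw [e1, e2, e3, e4] at h
        have t1 : tw i1 ≠ 0 := by unfold tw; positivity
        have t2 : th j1 ≠ 0 := by unfold th; positivity
        generalize (2:ℚ) ^ (m + 1) - 1 = A at *
        generalize (3:ℚ) ^ (n' + 1) - 1 = B at *
        generalize (2:ℚ) ^ (m' + 1) - 1 = D at *
        generalize (3:ℚ) ^ (n + 1) - 1 = E at *
        have u1 : (2:ℚ) ^ (m + 1) ≠ 0 := by positivity
        have u2 : (2:ℚ) ^ (m' + 1) ≠ 0 := by positivity
        have u3 : (3:ℚ) ^ (n + 1) ≠ 0 := by positivity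
        have u4 : (3:ℚ) ^ (n' + 1) ≠ 0 := by positivity
        generalize (2:ℚ) ^ (m + 1) = M at *
        generalize (2:ℚ) ^ (m' + 1) = M' at *
        generalize (3:ℚ) ^ (n + 1) = N at *
        generalize (3:ℚ) ^ (n' + 1) = N' at *
        field_simp at h
        linear_combination h
      exact_mod_cast e
    · apply ne_of_lt
      have p3 := th_lt h5
      have p4 := th_lt h6
      nlinarith [mul_pos (sub_pos.2 p1) (sub_pos.2 p4), mul_pos (sub_pos.2 p2) (sub_pos.2 p3)]
  · have h6 : j2 < j3 := by omega
    apply ne_of_gt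
    have p3 := th_lt h5
    have p4 := th_lt h6
    nlinarith [mul_pos (sub_pos.2 p1) (sub_pos.2 p4), mul_pos (sub_pos.2 p2) (sub_pos.2 p3)]

/-- The covector of the line with exponents `a`. -/
def vL (a : ℕ × ℕ) : Fin 3 → ℚ := ![tw a.1, th a.2, -1]

lemma dt3_L (h a b : ℕ × ℕ) : dt3 (vL h) (vL a) (vL b) =
    - (tw h.1 * (th a.2 - th b.2) + tw a.1 * (th b.2 - th h.2) + tw b.1 * (th h.2 - th a.2)) := by
  simp [dt3, vL]; ring

lemma core' (a b c : ℕ × ℕ) (ha : Band a) (hb : Band b) (hc : Band c) (h1 : a.1 < b.1)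
    (h2 : b.1 < c.1) (h3 : a.2 ≠ b.2) (h4 : b.2 ≠ c.2) :
    tw a.1 * (th b.2 - th c.2) + tw b.1 * (th c.2 - th a.2) + tw c.1 * (th a.2 - th b.2) ≠ 0 := by
  intro h
  apply core a b c ha hb hc h1 h2 h3 h4
  linear_combination h

lemma dt3_ne (h a b : ℕ × ℕ) (hh : Band h) (ha : Band a) (hb : Band b) (hab : a ≠ b)
    (h1 : h.1 ≠ a.1) (h2 : h.2 ≠ a.2) (h3 : h.1 ≠ b.1) (h4 : h.2 ≠ b.2) :
    dt3 (vL h) (vL a) (vL b) ≠ 0 := by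
  rw [dt3_L, neg_ne_zero]
  intro h0
  by_cases e1 : a.1 = b.1
  · have e2 : a.2 ≠ b.2 := fun e2 => hab (Prod.ext e1 e2)
    have : (tw h.1 - tw b.1) * (th a.2 - th b.2) = 0 := by
      rw [e1] at h0; linear_combination h0
    rcases mul_eq_zero.1 this with h5 | h5
    · exact h3 (tw_inj (sub_eq_zero.1 h5))
    · exact e2 (th_inj (sub_eq_zero.1 h5))
  by_cases e2 : a.2 = b.2
  · have : (tw a.1 - tw b.1) * (th b.2 - th h.2) = 0 := by
      rw [e2] at h0; linear_combination h0
    rcases mul_eq_zero.1 this with h5 | h5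
    · exact e1 (tw_inj (sub_eq_zero.1 h5))
    · exact h4 (th_inj (sub_eq_zero.1 h5)).symm
  rcases lt_or_gt_of_ne h1 with o1 | o1 <;> rcases lt_or_gt_of_ne h3 with o2 | o2 <;>
    rcases lt_or_gt_of_ne e1 with o3 | o3
  · exact core' h a b hh ha hb o1 o3 h2 e2 (by linear_combination h0)
  · exact core' h b a hh hb ha o2 o3 h4 (Ne.symm e2) (by linear_combination -h0)
  · omega
  · exact core' b h a hb hh ha o2 o1 (Ne.symm h4) h2 (by linear_combination h0)
  · exact core' a h b ha hh hb o1 o2 (Ne.symm h2) h4 (by linear_combination -h0)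
  · omega
  · exact core' a b h ha hb hh o3 o2 e2 (Ne.symm h4) (by linear_combination h0)
  · exact core' b a h hb ha hh o3 o1 (Ne.symm e2) (Ne.symm h2) (by linear_combination -h0)

/-- Comparing powers of two. -/
lemma two_side (e c c' : ℕ) (i i' j j' : ℕ) (hc : c % 2 = 1) (hlt : i < i') (he : e < i')
    (h : (2:ℚ) ^ e * c * tw i + c' * th j = 2 ^ e * c * tw i' + c' * th j') : False := by
  obtain ⟨m, rfl⟩ := Nat.exists_eq_add_of_lt hlt
  obtain ⟨k, hk⟩ := Nat.exists_eq_add_of_lt he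
  have e1 : ((2:ℚ) ^ (m + 1) - 1) * c * 3 ^ (j + j') = 2 ^ (k + 1) * (c' * (3 ^ j - 3 ^ j')) := by
    have q : (2:ℚ) ^ (i + m + 1) = 2 ^ e * 2 ^ (k + 1) := by rw [hk, add_assoc, pow_add]
    have q2 : (2:ℚ) ^ (i + m + 1) = 2 ^ i * 2 ^ (m + 1) := by rw [add_assoc, pow_add]
    simp only [tw, th] at h
    rw [pow_add (3:ℚ)]
    have h' : (2:ℚ) ^ e * c * (2 ^ (m + 1) - 1) / 2 ^ (i + m + 1) =
        c' * (1 / 3 ^ j' - 1 / 3 ^ j) := by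
      have : (1:ℚ) / 2 ^ i = 2 ^ (m + 1) / 2 ^ (i + m + 1) := by rw [q2]; field_simp
      rw [this] at h
      linear_combination h
    rw [q] at h'
    field_simp at h'
    linear_combination h'
  have e2 : ((2:ℤ) ^ (m + 1) - 1) * c * 3 ^ (j + j') = 2 ^ (k + 1) * (c' * (3 ^ j - 3 ^ j')) := by
    exact_mod_cast e1
  have h3 : Odd ((3:ℤ) ^ (j + j')) := Odd.pow (by decide)
  have h2 : Odd ((2:ℤ) ^ (m + 1) - 1) := by
    rw [pow_succ]; exact ⟨2 ^ m - 1, by ring⟩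
  have h1 : Odd (c : ℤ) := by
    rw [Int.odd_iff]; omega
  have h4 := (h2.mul h1).mul h3
  rw [e2, pow_succ] at h4
  rw [← Int.not_even_iff_odd] at h4
  exact h4 ⟨2 ^ k * (c' * (3 ^ j - 3 ^ j')), by ring⟩

/-- Comparing powers of three. -/
lemma three_side (e c : ℕ) (j j' : ℕ) (x : ℤ) (s : ℕ) (hc : ¬ ((3:ℤ) ∣ c)) (hlt : j < j')
    (he : e < j') (h : (3:ℚ) ^ e * c * (th j - th j') * 2 ^ s = x) : False := by
  obtain ⟨m, rfl⟩ := Nat.exists_eq_add_of_lt hlt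
  obtain ⟨k, hk⟩ := Nat.exists_eq_add_of_lt he
  have e1 : ((3:ℚ) ^ (m + 1) - 1) * c * 2 ^ s = 3 ^ (k + 1) * x := by
    have q : (3:ℚ) ^ (j + m + 1) = 3 ^ e * 3 ^ (k + 1) := by rw [hk, add_assoc, pow_add]
    have q2 : (3:ℚ) ^ (j + m + 1) = 3 ^ j * 3 ^ (m + 1) := by rw [add_assoc, pow_add]
    simp only [th] at h
    have : (1:ℚ) / 3 ^ j = 3 ^ (m + 1) / 3 ^ (j + m + 1) := by rw [q2]; field_simp
    rw [this, q] at h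
    rw [← h]
    field_simp
  have e2 : ((3:ℤ) ^ (m + 1) - 1) * c * 2 ^ s = 3 ^ (k + 1) * x := by
    exact_mod_cast e1
  have p3 : Prime (3:ℤ) := Int.prime_three
  have h4 : (3:ℤ) ∣ ((3:ℤ) ^ (m + 1) - 1) * c * 2 ^ s := by
    rw [e2, pow_succ]; exact ⟨3 ^ k * x, by ring⟩
  rcases p3.dvd_or_dvd h4 with h5 | h5
  · rcases p3.dvd_or_dvd h5 with h6 | h6
    · rw [pow_succ] at h6
      have : (3:ℤ) ∣ 3 ^ m * 3 := dvd_mul_left _ _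
      have h7 := (dvd_sub_right this).1 h6
      norm_num at h7
    · exact hc h6
  · have := p3.dvd_of_dvd_pow h5
    norm_num at this

lemma H2_inj (a b : ℕ × ℕ) (ha : Band a) (hb : Band b) (h : tw a.1 + th a.2 = tw b.1 + th b.2) :
    a = b := by
  obtain ⟨i, j⟩ := a
  obtain ⟨i', j'⟩ := b
  simp only [Band] at *
  have hi : i = i' := by
    rcases lt_trichotomy i i' with h1 | h1 | h1
    · exact (two_side 0 1 1 i i' j j' (by norm_num) h1 (by omega) (by simpa using h)).elim
    · exact h1
    · exact (two_side 0 1 1 i' i j' j (by norm_num) h1 (by omega) (by simpa using h.symm)).elim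
  subst hi
  have hj : j = j' := th_inj (by linarith)
  rw [hj]

lemma tw_two_pow (i s : ℕ) (h : i ≤ s) : tw i * 2 ^ s = ((2 ^ (s - i) : ℤ) : ℚ) := by
  obtain ⟨k, rfl⟩ := Nat.exists_eq_add_of_le h
  simp only [tw, add_tsub_cancel_left, pow_add]
  push_cast
  field_simp

lemma H1_inj (a b : ℕ × ℕ) (ha : Band a) (hb : Band b) (ha2 : a ≠ (2, 2)) (hb2 : b ≠ (2, 2))
    (h : 8 * tw a.1 + 27 * th a.2 = 8 * tw b.1 + 27 * th b.2) : a = b := by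
  obtain ⟨i, j⟩ := a
  obtain ⟨i', j'⟩ := b
  simp only [Band, ne_eq, Prod.mk.injEq] at *
  by_cases hi : i = i'
  · subst hi
    exact ⟨rfl, th_inj (by linarith)⟩
  by_cases hj : j = j'
  · subst hj
    exact ⟨tw_inj (by linarith), rfl⟩
  exfalso
  have hi3 : i ≤ 3 ∧ i' ≤ 3 := by
    rcases lt_or_gt_of_ne hi with h1 | h1
    · by_contra hc
      exact two_side 3 1 27 i i' j j' (by norm_num) h1 (by omega)
        (by push_cast; linear_combination h)
    · by_contra hc
      exact two_side 3 1 27 i' i j' j (by norm_num) h1 (by omega)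
        (by push_cast; linear_combination -h)
  have key : 27 * (th j - th j') * 2 ^ 3 = ((8 * (2 ^ (3 - i') - 2 ^ (3 - i)) : ℤ) : ℚ) := by
    have t1 := tw_two_pow i 3 hi3.1
    have t2 := tw_two_pow i' 3 hi3.2
    push_cast at t1 t2 ⊢
    linear_combination 8 * h - 8 * t1 + 8 * t2
  have hj3 : j ≤ 3 ∧ j' ≤ 3 := by
    rcases lt_or_gt_of_ne hj with h1 | h1
    · by_contra hc
      exact three_side 3 1 j j' _ 3 (by norm_num) h1 (by omega)
        (by rw [← key]; push_cast; ring)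
    · by_contra hc
      exact three_side 3 1 j' j (-(8 * (2 ^ (3 - i') - 2 ^ (3 - i)))) 3 (by norm_num) h1 (by omega)
        (by rw [Int.cast_neg, ← key]; push_cast; ring)
  obtain ⟨hi1, hi2⟩ := hi3
  obtain ⟨hj1, hj2⟩ := hj3
  obtain ⟨ha0, ha1, ha3⟩ := ha
  obtain ⟨hb0, hb1, hb3⟩ := hb
  clear key
  interval_cases i <;> interval_cases j <;> simp at ha2 <;> interval_cases i' <;>
    interval_cases j' <;> simp at hb2 hi hj <;> norm_num [tw, th] at h

/-! ### The arrangements -/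

/-- The line `x = 0`. -/
def vX : Fin 3 → ℚ := ![1, 0, 0]
/-- The line `y = 0`. -/
def vY : Fin 3 → ℚ := ![0, 1, 0]
/-- The line `H_1`. -/
def v1 : Fin 3 → ℚ := ![27, -8, 0]
/-- The line `H_2`. -/
def v2 : Fin 3 → ℚ := ![1, -1, 0]

lemma vL_inj : Function.Injective vL := by
  intro a b h
  have h0 := congrFun h 0
  have h1 := congrFun h 1
  simp [vL] at h0 h1
  exact Prod.ext (tw_inj h0) (th_inj h1)

lemma par_LL (a b : ℕ × ℕ) (h : a ≠ b) : ¬ Par (vL a) (vL b) := by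
  intro hp
  have h0 := hp 0 2
  have h1 := hp 1 2
  simp [vL] at h0 h1
  exact h (Prod.ext (tw_inj h0) (th_inj h1))

lemma par_XL (b : ℕ × ℕ) : ¬ Par vX (vL b) := by
  intro hp; have := hp 0 2; simp [vX, vL] at this

lemma par_YL (b : ℕ × ℕ) : ¬ Par vY (vL b) := by
  intro hp; have := hp 1 2; simp [vY, vL] at this

lemma par_1L (b : ℕ × ℕ) : ¬ Par v1 (vL b) := by
  intro hp; have := hp 0 2; simp [v1, vL] at this

lemma par_2L (b : ℕ × ℕ) : ¬ Par v2 (vL b) := by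
  intro hp; have := hp 0 2; simp [v2, vL] at this

lemma par_XY : ¬ Par vX vY := by
  intro hp; have := hp 0 1; simp [vX, vY] at this

lemma par_X1 : ¬ Par vX v1 := by
  intro hp; have := hp 0 1; simp [vX, v1] at this

lemma par_Y1 : ¬ Par vY v1 := by
  intro hp; have := hp 0 1; simp [vY, v1] at this

lemma par_X2 : ¬ Par vX v2 := by
  intro hp; have := hp 0 1; simp [vX, v2] at this

lemma par_Y2 : ¬ Par vY v2 := by
  intro hp; have := hp 0 1; simp [vY, v2] at this

lemma par_12 : ¬ Par v1 v2 := by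
  intro hp; have := hp 0 1; simp [v1, v2] at this

lemma par_self (a : Fin 3 → ℚ) : Par a a := fun _ _ => mul_comm _ _

lemma ne_of_not_par {a b : Fin 3 → ℚ} (h : ¬ Par a b) : a ≠ b := by
  rintro rfl; exact h (par_self a)

/-- The arrangement given by an index set. -/
noncomputable def NI (I : Finset (ℕ × ℕ)) : Finset (Fin 3 → ℚ) := insert vX (insert vY (I.image vL))

lemma mem_NI (I : Finset (ℕ × ℕ)) (a : Fin 3 → ℚ) :
    a ∈ NI I ↔ a = vX ∨ a = vY ∨ ∃ i ∈ I, vL i = a := by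
  simp [NI]

lemma notMem_img (I : Finset (ℕ × ℕ)) (a : Fin 3 → ℚ) (h : ∀ i, ¬ Par a (vL i)) :
    a ∉ I.image vL := by
  intro hm
  obtain ⟨i, -, hi⟩ := Finset.mem_image.1 hm
  exact ne_of_not_par (h i) hi.symm

lemma card_NI (I : Finset (ℕ × ℕ)) : (NI I).card = I.card + 2 := by
  unfold NI
  rw [Finset.card_insert_of_notMem, Finset.card_insert_of_notMem,
    Finset.card_image_of_injective _ vL_inj]
  · exact notMem_img _ _ par_YL
  · rw [Finset.mem_insert, not_or]
    exact ⟨ne_of_not_par par_XY, notMem_img _ _ par_XL⟩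

/-- Pairwise independence. -/
def PW (N : Finset (Fin 3 → ℚ)) : Prop := ∀ a ∈ N, ∀ b ∈ N, a ≠ b → ¬ Par a b

lemma pw_insert (N : Finset (Fin 3 → ℚ)) (h : Fin 3 → ℚ) (hN : PW N) (hh : ∀ a ∈ N, ¬ Par a h) :
    PW (insert h N) := by
  intro a ha b hb hab
  rw [Finset.mem_insert] at ha hb
  rcases ha with rfl | ha <;> rcases hb with rfl | hb
  · exact absurd rfl hab
  · exact fun hp => hh b hb hp.symm
  · exact hh a ha
  · exact hN a ha b hb hab

lemma pw_NI (I : Finset (ℕ × ℕ)) : PW (NI I) := by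
  unfold NI
  apply pw_insert
  · apply pw_insert
    · intro a ha b hb hab
      obtain ⟨i, -, rfl⟩ := Finset.mem_image.1 ha
      obtain ⟨j, -, rfl⟩ := Finset.mem_image.1 hb
      exact par_LL i j (fun h => hab (by rw [h]))
    · intro a ha
      obtain ⟨i, -, rfl⟩ := Finset.mem_image.1 ha
      exact fun hp => par_YL i hp.symm
  · intro a ha
    rw [Finset.mem_insert] at ha
    rcases ha with rfl | ha
    · exact fun hp => par_XY hp.symm
    · obtain ⟨i, -, rfl⟩ := Finset.mem_image.1 ha
      exact fun hp => par_XL i hp.symm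

lemma par_NI_1 (I : Finset (ℕ × ℕ)) : ∀ a ∈ NI I, ¬ Par a v1 := by
  intro a ha
  rw [mem_NI] at ha
  rcases ha with rfl | rfl | ⟨i, -, rfl⟩
  · exact par_X1
  · exact par_Y1
  · exact fun hp => par_1L i hp.symm

lemma par_NI_2 (I : Finset (ℕ × ℕ)) : ∀ a ∈ insert v1 (NI I), ¬ Par a v2 := by
  intro a ha
  rw [Finset.mem_insert, mem_NI] at ha
  rcases ha with rfl | rfl | rfl | ⟨i, -, rfl⟩
  · exact par_12
  · exact par_X2
  · exact par_Y2
  · exact fun hp => par_2L i hp.symm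

lemma notMem_of_par {N : Finset (Fin 3 → ℚ)} {h : Fin 3 → ℚ} (hh : ∀ a ∈ N, ¬ Par a h) :
    h ∉ N := fun hm => hh h hm (par_self h)

lemma dt3_swap (h a b : Fin 3 → ℚ) : dt3 h a b = - dt3 h b a := by
  simp only [dt3]; ring

lemma good_step (I : Finset (ℕ × ℕ)) (h e1 e2 : ℕ × ℕ) (hI : ∀ a ∈ I, Band a) (hh : Band h)
    (hhI : h ∉ I) (he : ∀ a ∈ I, a.1 = h.1 ∨ a.2 = h.2 → a = e1 ∨ a = e2)
    (hG : Good (NI I)) : Good (NI (insert h I)) := by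
  have e : NI (insert h I) = insert (vL h) (NI I) := by
    ext a
    simp only [NI, Finset.image_insert, Finset.mem_insert]
    tauto
  rw [e]
  have hpar : ∀ a ∈ NI I, ¬ Par a (vL h) := by
    intro a ha
    rw [mem_NI] at ha
    rcases ha with rfl | rfl | ⟨i, hi, rfl⟩
    · exact par_XL h
    · exact par_YL h
    · exact par_LL i h (fun h' => hhI (h' ▸ hi))
  obtain ⟨J, hJ⟩ : ∃ J, J = I.filter (fun a => a.1 ≠ h.1 ∧ a.2 ≠ h.2) := ⟨_, rfl⟩
  have hJm : ∀ a ∈ J, a ∈ I ∧ a.1 ≠ h.1 ∧ a.2 ≠ h.2 := by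
    intro a ha; rw [hJ, Finset.mem_filter] at ha; exact ha
  have hcard : I.card ≤ J.card + 2 := by
    have hsub : I ⊆ J ∪ {e1, e2} := by
      intro a ha
      rw [Finset.mem_union, hJ, Finset.mem_filter]
      by_cases hc : a.1 = h.1 ∨ a.2 = h.2
      · right
        rcases he a ha hc with h1 | h1 <;> simp [h1]
      · left
        push Not at hc
        exact ⟨ha, hc⟩
    calc I.card ≤ _ := Finset.card_le_card hsub
      _ ≤ J.card + ({e1, e2} : Finset (ℕ × ℕ)).card := Finset.card_union_le _ _
      _ ≤ J.card + 2 := by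
        have := Finset.card_le_two (a := e1) (b := e2)
        omega
  have hXL : ∀ i ∈ J, dt3 (vL h) vX (vL i) ≠ 0 := by
    intro i hi h0
    apply (hJm i hi).2.2
    apply th_inj
    simp [dt3, vX, vL] at h0
    linarith
  have hYL : ∀ i ∈ J, dt3 (vL h) vY (vL i) ≠ 0 := by
    intro i hi h0
    apply (hJm i hi).2.1
    apply tw_inj
    simp [dt3, vY, vL] at h0
    linarith
  have hXY : dt3 (vL h) vX vY ≠ 0 := by simp [dt3, vX, vY, vL]
  apply good_insert (NI I) (NI J) (vL h) hG (notMem_of_par hpar)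
  · intro a ha
    rw [mem_NI] at ha ⊢
    rcases ha with ha | ha | ⟨i, hi, ha⟩
    · exact Or.inl ha
    · exact Or.inr (Or.inl ha)
    · exact Or.inr (Or.inr ⟨i, (hJm i hi).1, ha⟩)
  · rw [card_NI, card_NI]; omega
  · exact hpar
  · intro a ha b hb hab
    rw [mem_NI] at ha hb
    rcases ha with rfl | rfl | ⟨i, hi, rfl⟩ <;> rcases hb with rfl | rfl | ⟨j, hj, rfl⟩
    · exact absurd rfl hab
    · exact hXY
    · exact hXL j hj
    · rw [dt3_swap, neg_ne_zero]; exact hXY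
    · exact absurd rfl hab
    · exact hYL j hj
    · rw [dt3_swap, neg_ne_zero]; exact hXL i hi
    · rw [dt3_swap, neg_ne_zero]; exact hYL i hi
    · have h1 := hJm i hi
      have h2 := hJm j hj
      exact dt3_ne h i j hh (hI i h1.1) (hI j h2.1) (fun h' => hab (by rw [h']))
        h1.2.1.symm h1.2.2.symm h2.2.1.symm h2.2.2.symm

/-- The index set of the base arrangement. -/
def idx (p : ℕ) : Finset (ℕ × ℕ) :=
  (Finset.range (p + 2) ×ˢ Finset.range (p + 2)).filter
    (fun a => 1 ≤ a.1 ∧ a.1 ≤ a.2 ∧ a.2 ≤ a.1 + 2)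

lemma mem_idx (p : ℕ) (a : ℕ × ℕ) :
    a ∈ idx p ↔ 1 ≤ a.1 ∧ a.1 ≤ a.2 ∧ a.2 ≤ a.1 + 2 ∧ a.2 ≤ p + 1 := by
  simp only [idx, Finset.mem_filter, Finset.mem_product, Finset.mem_range]
  omega

lemma idx_band (p : ℕ) : ∀ a ∈ idx p, Band a := by
  intro a ha
  rw [mem_idx] at ha
  exact ⟨ha.1, ha.2.1, ha.2.2.1⟩

lemma idx_zero : idx 0 = {(1, 1)} := by decide

lemma idx_one : idx 1 = insert (2, 2) (insert (1, 2) (idx 0)) := by decide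

lemma idx_succ (p : ℕ) (hp : 1 ≤ p) : idx (p + 1) =
    insert (p + 2, p + 2) (insert (p + 1, p + 2) (insert (p, p + 2) (idx p))) := by
  ext ⟨i, j⟩
  simp only [Finset.mem_insert, mem_idx, Prod.mk.injEq]
  omega

lemma good_idx (p : ℕ) (hp : 1 ≤ p) : Good (NI (idx p)) ∧ (idx p).card = 3 * p := by
  induction p, hp using Nat.le_induction with
  | base =>
    refine ⟨?_, by decide⟩
    rw [idx_one]
    apply good_step _ (2, 2) (1, 2) (1, 2)
    · intro a ha
      rw [Finset.mem_insert] at ha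
      rcases ha with rfl | ha
      · exact ⟨by norm_num, by norm_num, by norm_num⟩
      · exact idx_band 0 a ha
    · exact ⟨by norm_num, by norm_num, by norm_num⟩
    · decide
    · decide
    · apply good_step _ (1, 2) (1, 1) (1, 1)
      · exact idx_band 0
      · exact ⟨by norm_num, by norm_num, by norm_num⟩
      · decide
      · decide
      · apply good_small
        rw [card_NI, idx_zero]; simp
  | succ p hp ih =>
    rw [idx_succ p hp]
    have n1 : (p, p + 2) ∉ idx p := by rw [mem_idx]; simp
    have n2 : (p + 1, p + 2) ∉ insert (p, p + 2) (idx p) := by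
      rw [Finset.mem_insert, mem_idx]; simp
    have n3 : (p + 2, p + 2) ∉ insert (p + 1, p + 2) (insert (p, p + 2) (idx p)) := by
      rw [Finset.mem_insert, Finset.mem_insert, mem_idx]; simp
    have b1 : Band (p, p + 2) := ⟨hp, by simp, by simp⟩
    have b2 : Band (p + 1, p + 2) := ⟨by simp, by simp, by simp⟩
    have b3 : Band (p + 2, p + 2) := ⟨by simp, by simp, by simp⟩
    constructor
    · apply good_step _ (p + 2, p + 2) (p, p + 2) (p + 1, p + 2) _ b3 n3
      · rintro ⟨i, j⟩
        simp only [Finset.mem_insert, mem_idx, Prod.mk.injEq]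
        omega
      · apply good_step _ (p + 1, p + 2) (p, p + 2) (p + 1, p + 1) _ b2 n2
        · rintro ⟨i, j⟩
          simp only [Finset.mem_insert, mem_idx, Prod.mk.injEq]
          omega
        · apply good_step _ (p, p + 2) (p, p) (p, p + 1) (idx_band p) b1 n1
          · rintro ⟨i, j⟩
            simp only [mem_idx, Prod.mk.injEq]
            omega
          · exact ih.1
        · rintro a ha
          rw [Finset.mem_insert] at ha
          rcases ha with rfl | ha
          · exact b1
          · exact idx_band p a ha
      · rintro a ha
        rw [Finset.mem_insert, Finset.mem_insert] at ha
        rcases ha with rfl | rfl | ha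
        · exact b2
        · exact b1
        · exact idx_band p a ha
    · rw [Finset.card_insert_of_notMem n3, Finset.card_insert_of_notMem n2,
        Finset.card_insert_of_notMem n1, ih.2]
      ring

lemma good_H1 (I : Finset (ℕ × ℕ)) (hI : ∀ a ∈ I, Band a) (h22 : (2, 2) ∈ I)
    (hG : Good (NI I)) : Good (insert v1 (NI I)) := by
  have hXL : ∀ i, dt3 v1 vX (vL i) ≠ 0 := by
    intro i; simp [dt3, v1, vX, vL]
  apply good_insert (NI I) (insert vX ((I.erase (2, 2)).image vL)) v1 hG
    (notMem_of_par (par_NI_1 I))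
  · intro a ha
    rw [mem_NI]
    rw [Finset.mem_insert, Finset.mem_image] at ha
    rcases ha with ha | ⟨i, hi, ha⟩
    · exact Or.inl ha
    · exact Or.inr (Or.inr ⟨i, Finset.mem_of_mem_erase hi, ha⟩)
  · rw [card_NI, Finset.card_insert_of_notMem (notMem_img _ _ par_XL),
      Finset.card_image_of_injective _ vL_inj, Finset.card_erase_of_mem h22]
    omega
  · exact par_NI_1 I
  · intro a ha b hb hab
    rw [Finset.mem_insert, Finset.mem_image] at ha hb
    rcases ha with rfl | ⟨i, hi, rfl⟩ <;> rcases hb with rfl | ⟨j, hj, rfl⟩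
    · exact absurd rfl hab
    · exact hXL j
    · rw [dt3_swap, neg_ne_zero]; exact hXL i
    · intro h0
      apply hab
      rw [Finset.mem_erase] at hi hj
      rw [H1_inj i j (hI i hi.2) (hI j hj.2) hi.1 hj.1]
      simp [dt3, v1, vL] at h0
      linarith

lemma good_H2 (I : Finset (ℕ × ℕ)) (hI : ∀ a ∈ I, Band a)
    (hG : Good (insert v1 (NI I))) : Good (insert v2 (insert v1 (NI I))) := by
  have hXL : ∀ i, dt3 v2 vX (vL i) ≠ 0 := by
    intro i; simp [dt3, v2, vX, vL]
  apply good_insert (insert v1 (NI I)) (insert vX (I.image vL)) v2 hG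
    (notMem_of_par (par_NI_2 I))
  · intro a ha
    rw [Finset.mem_insert, mem_NI]
    rw [Finset.mem_insert, Finset.mem_image] at ha
    rcases ha with ha | ⟨i, hi, ha⟩
    · exact Or.inr (Or.inl ha)
    · exact Or.inr (Or.inr (Or.inr ⟨i, hi, ha⟩))
  · rw [Finset.card_insert_of_notMem (notMem_of_par (par_NI_1 I)), card_NI,
      Finset.card_insert_of_notMem (notMem_img _ _ par_XL),
      Finset.card_image_of_injective _ vL_inj]
  · exact par_NI_2 I
  · intro a ha b hb hab
    rw [Finset.mem_insert, Finset.mem_image] at ha hb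
    rcases ha with rfl | ⟨i, hi, rfl⟩ <;> rcases hb with rfl | ⟨j, hj, rfl⟩
    · exact absurd rfl hab
    · exact hXL j
    · rw [dt3_swap, neg_ne_zero]; exact hXL i
    · intro h0
      apply hab
      rw [H2_inj i j (hI i hi) (hI j hj)]
      simp [dt3, v2, vL] at h0
      linarith

lemma lin_vX : lin vX = X 0 := by simp [lin, vX]
lemma lin_vY : lin vY = X 1 := by simp [lin, vY]
lemma lin_v1 : lin v1 = lineH1 := by
  simp [lin, v1, lineH1, sub_eq_add_neg]
lemma lin_v2 : lin v2 = lineH2 := by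
  simp [lin, v2, lineH2, sub_eq_add_neg]
lemma lin_vL (a : ℕ × ℕ) : lin (vL a) = lineL (1 / 2 ^ a.1) (1 / 3 ^ a.2) := by
  simp [lin, vL, lineL, sub_eq_add_neg, tw, th]

lemma baseA_eq (p : ℕ) (hp : 1 ≤ p) : baseA p = (NI (idx p)).image lin := by
  ext f
  simp only [baseA, NI, Finset.image_insert, Finset.mem_union, Finset.mem_insert,
    Finset.mem_singleton, Finset.mem_image, Finset.mem_Icc, lin_vX, lin_vY]
  constructor
  · rintro ((((h | h | h) | ⟨j, hj, h⟩) | ⟨j, hj, h⟩) | ⟨j, hj, h⟩)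
    · exact Or.inl h
    · exact Or.inr (Or.inl h)
    · exact Or.inr (Or.inr ⟨_, ⟨(p + 1, p + 1), (by rw [mem_idx]; simp), rfl⟩,
        by rw [lin_vL, h]⟩)
    · exact Or.inr (Or.inr ⟨_, ⟨(j, j), (by rw [mem_idx]; dsimp only; omega), rfl⟩,
        by rw [lin_vL, h]⟩)
    · exact Or.inr (Or.inr ⟨_, ⟨(j, j + 1), (by rw [mem_idx]; dsimp only; omega), rfl⟩,
        by rw [lin_vL, h]⟩)
    · exact Or.inr (Or.inr ⟨_, ⟨(j, j + 2), (by rw [mem_idx]; dsimp only; omega), rfl⟩,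
        by rw [lin_vL, h]⟩)
  · rintro (h | h | ⟨_, ⟨⟨i, j⟩, hij, rfl⟩, h⟩)
    · simp [h]
    · simp [h]
    · rw [mem_idx] at hij
      rw [lin_vL] at h
      dsimp only at hij h
      obtain hj | hj | hj : j = i ∨ j = i + 1 ∨ j = i + 2 := by omega
      · subst hj
        by_cases hjp : j = p + 1
        · subst hjp
          exact Or.inl (Or.inl (Or.inl (Or.inr (Or.inr h.symm))))
        · exact Or.inl (Or.inl (Or.inr ⟨j, by omega, h⟩))
      · subst hj
        exact Or.inl (Or.inr ⟨i, by omega, h⟩)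
      · subst hj
        exact Or.inr ⟨i, by omega, h⟩

/-- Four lines through a common point. -/
noncomputable def S4 : Finset (Fin 3 → ℚ) := insert vX (({(1, 3), (2, 3), (3, 3)} : Finset (ℕ × ℕ)).image vL)

lemma S4_card : S4.card = 4 := by
  unfold S4
  rw [Finset.card_insert_of_notMem (notMem_img _ _ par_XL),
      Finset.card_image_of_injective _ vL_inj]
  rfl

lemma S4_sub (p : ℕ) (hp : 2 ≤ p) : S4 ⊆ NI (idx p) := by
  intro a ha
  rw [S4, Finset.mem_insert, Finset.mem_image] at ha
  rw [mem_NI]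
  rcases ha with ha | ⟨i, hi, ha⟩
  · exact Or.inl ha
  · refine Or.inr (Or.inr ⟨i, ?_, ha⟩)
    rw [mem_idx]
    simp only [Finset.mem_insert, Finset.mem_singleton] at hi
    rcases hi with rfl | rfl | rfl <;> dsimp only <;> omega

lemma mdr_of (p : ℕ) (hp : 2 ≤ p) (N : Finset (Fin 3 → ℚ)) (hN : NI (idx p) ⊆ N) (hG : Good N)
    (hpw : PW N) : mdr (N.image lin) = N.card - 4 := by
  have hc : 5 ≤ N.card := by
    have h1 := Finset.card_le_card hN
    rw [card_NI, (good_idx p (by omega)).2] at h1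
    omega
  apply mdr_eq N S4 hG _ hpw ((S4_sub p hp).trans hN) S4_card hc ![0, 27, 1] rfl rfl
  · intro a ha
    rw [S4, Finset.mem_insert, Finset.mem_image] at ha
    rcases ha with rfl | ⟨i, hi, rfl⟩
    · simp [dt, vX]
    · simp only [Finset.mem_insert, Finset.mem_singleton] at hi
      rcases hi with rfl | rfl | rfl <;> simp [dt, vL, tw, th] <;> norm_num
  · rintro a ha rfl
    obtain ⟨b, hb, hab⟩ := Finset.exists_mem_ne (by omega : 1 < N.card) (0 : Fin 3 → ℚ)
    exact hpw 0 ha b hb hab.symm (fun i j => by simp)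

/-- For the family of line arrangements `A_d` (`d ≥ 8`) defined above,
one has `r(A_d) = d − 4` for all `d ≥ 8`. -/
theorem mdr_Afam (d : ℕ) (hd : 8 ≤ d) : mdr (Afam d) = d - 4 := by
  obtain hm | hm | hm : d % 3 = 2 ∨ d % 3 = 0 ∨ d % 3 = 1 := by omega
  · obtain ⟨p, hp⟩ : ∃ p, d = 3 * p + 2 := ⟨d / 3, by omega⟩
    have h1 : (d - 2) / 3 = p := by omega
    have hg := good_idx p (by omega)
    rw [Afam, if_pos hm, h1, baseA_eq p (by omega),
      mdr_of p (by omega) _ subset_rfl hg.1 (pw_NI _), card_NI, hg.2, hp]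
  · obtain ⟨p, hp⟩ : ∃ p, d = 3 * p + 3 := ⟨d / 3 - 1, by omega⟩
    have h1 : (d - 3) / 3 = p := by omega
    have hg := good_idx p (by omega)
    rw [Afam, if_neg (by omega), if_pos hm, h1, baseA_eq p (by omega), ← lin_v1,
      ← Finset.image_insert,
      mdr_of p (by omega) _ (Finset.subset_insert _ _)
        (good_H1 _ (idx_band p) (by rw [mem_idx]; dsimp only; omega) hg.1)
        (pw_insert _ _ (pw_NI _) (par_NI_1 _)),
      Finset.card_insert_of_notMem (notMem_of_par (par_NI_1 _)), card_NI, hg.2, hp]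
  · obtain ⟨p, hp⟩ : ∃ p, d = 3 * p + 4 := ⟨d / 3 - 1, by omega⟩
    have h1 : (d - 4) / 3 = p := by omega
    have hg := good_idx p (by omega)
    rw [Afam, if_neg (by omega), if_neg (by omega), h1, baseA_eq p (by omega), ← lin_v1, ← lin_v2,
      ← Finset.image_insert, ← Finset.image_insert,
      mdr_of p (by omega) _ ((Finset.subset_insert _ _).trans (Finset.subset_insert _ _))
        (good_H2 _ (idx_band p)
          (good_H1 _ (idx_band p) (by rw [mem_idx]; dsimp only; omega) hg.1))
        (pw_insert _ _ (pw_insert _ _ (pw_NI _) (par_NI_1 _)) (par_NI_2 _)),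
      Finset.card_insert_of_notMem (notMem_of_par (par_NI_2 _)),
      Finset.card_insert_of_notMem (notMem_of_par (par_NI_1 _)), card_NI, hg.2, hp]
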